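/- Let θ ∈ ℝ, σ > 0, and let U and V be independent standard normal random variables. Then the random variable θU² + σUV has probability density function f(x) = (1/(σπ)) · exp(θx/σ²) · K₀(√(θ²+σ²)|x|/σ²) for all real x, i.e., θU² + σUV has the variance-gamma distribution VG(1, θ, σ, 0). -/

import Mathlib

/-!
Conditionally on `U = u ≠ 0`, the variable `θU² + σUV` has law `N(θu², σ²u²)`, so by Tonelli
`θU² + σUV` has density `x ↦ ∫ φ(u) φ_{θu², σ²u²}(x) du`. Expanding the squares in the exponents,
this equals `(π|σ|)⁻¹ exp(θx/σ²) ∫₀^∞ u⁻¹ exp(-(a u² + b/u²)) du` with `a = (θ² + σ²)/(2σ²)` and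
`b = x²/(2σ²)`. The substitution `u = √(√(b/a) eᵗ)` turns the exponent into `-2√(ab) cosh t` and the
integral into `K₀(2√(ab))`, where `2√(ab) = √(θ² + σ²)|x|/σ²`.
-/

open MeasureTheory ProbabilityTheory

/-- The modified Bessel function of the second kind `K_ν(x)`, for `x > 0` given by
`K_ν(x) = ∫₀^∞ exp(−x cosh t) cosh(ν t) dt`. -/
noncomputable def besselK (ν x : ℝ) : ℝ :=
  ∫ t in Set.Ioi (0 : ℝ), Real.exp (-x * Real.cosh t) * Real.cosh (ν * t)

open Set Real
open scoped ENNReal NNReal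

section Lebesgue

lemma lintegral_eq_setLIntegral_Ioi_add_comp_neg (f : ℝ → ℝ≥0∞) :
    ∫⁻ x, f x = (∫⁻ x in Ioi 0, f x) + ∫⁻ x in Ioi 0, f (-x) := by
  have hIio : ∫⁻ x in Ioi 0, f (-x) = ∫⁻ x in Iio 0, f x := by
    simpa using (Measure.measurePreserving_neg (volume : Measure ℝ)).setLIntegral_comp_preimage_emb
      (MeasurableEquiv.neg ℝ).measurableEmbedding f (Iio 0)
  rw [hIio, setLIntegral_congr Iio_ae_eq_Iic, ← compl_Ioi,
    lintegral_add_compl f measurableSet_Ioi]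

lemma range_const_mul_exp_const_mul {c p : ℝ} (hc : 0 < c) (hp : p ≠ 0) :
    range (fun t ↦ c * exp (p * t)) = Ioi 0 := by
  rw [range_comp' (c * ·) (fun t ↦ exp (p * t)), range_comp' exp,
    (mul_left_surjective₀ hp).range_eq, image_univ, range_exp, image_mul_left_Ioi hc, mul_zero]

lemma setLIntegral_Ioi_eq_lintegral_const_mul_exp {c p : ℝ} (hc : 0 < c) (hp : p ≠ 0)
    (f : ℝ → ℝ≥0∞) :
    ∫⁻ u in Ioi 0, f u =
      ∫⁻ t, ENNReal.ofReal (|p| * (c * exp (p * t))) * f (c * exp (p * t)) := by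
  have hderiv (t : ℝ) : HasDerivAt (fun t ↦ c * exp (p * t)) (p * (c * exp (p * t))) t := by
    convert! (((hasDerivAt_id t).const_mul p).exp.const_mul c) using 1
    simp only [id]
    ring
  have hinj : Function.Injective fun t ↦ c * exp (p * t) :=
    (mul_right_injective₀ hc.ne').comp (exp_injective.comp (mul_right_injective₀ hp))
  rw [← range_const_mul_exp_const_mul hc hp, ← image_univ,
    lintegral_image_eq_lintegral_abs_deriv_mul .univ (fun t _ ↦ (hderiv t).hasDerivWithinAt)
      hinj.injOn, Measure.restrict_univ]
  simp_rw [abs_mul, abs_of_pos hc, abs_exp]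

lemma map_prod_eq_withDensity_lintegral {α β γ : Type*} [MeasurableSpace α] [MeasurableSpace β]
    [MeasurableSpace γ] {μ : Measure α} {ν : Measure β} {ρ : Measure γ} [SFinite μ] [SFinite ν]
    [SFinite ρ] {F : α × β → γ} (hF : Measurable F) {q : α → γ → ℝ≥0∞}
    (hq : Measurable (Function.uncurry q))
    (hcond : ∀ᵐ a ∂μ, ν.map (fun b ↦ F (a, b)) = ρ.withDensity (q a)) :
    (μ.prod ν).map F = ρ.withDensity fun x ↦ ∫⁻ a, q a x ∂μ := by
  ext s hs
  calc (μ.prod ν).map F s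
      = ∫⁻ a, ν.map (fun b ↦ F (a, b)) s ∂μ := by
        rw [Measure.map_apply hF hs, Measure.prod_apply (hF hs)]
        refine lintegral_congr fun a ↦ ?_
        rw [Measure.map_apply (by fun_prop) hs]
        rfl
    _ = ∫⁻ a, ∫⁻ x in s, q a x ∂ρ ∂μ := by
        refine lintegral_congr_ae (hcond.mono fun a ha ↦ ?_)
        simp only [ha, withDensity_apply _ hs]
    _ = ∫⁻ x in s, ∫⁻ a, q a x ∂μ ∂ρ := lintegral_lintegral_swap hq.aemeasurable
    _ = ρ.withDensity (fun x ↦ ∫⁻ a, q a x ∂μ) s := (withDensity_apply _ hs).symm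

end Lebesgue

section BesselK

lemma cosh_le_exp_abs (x : ℝ) : cosh x ≤ exp |x| := by
  rw [← cosh_abs, cosh_eq]
  linarith [exp_le_exp.mpr (neg_le_self (abs_nonneg x))]

lemma sq_div_four_le_cosh (x : ℝ) : x ^ 2 / 4 ≤ cosh x := by
  rw [← cosh_abs, ← sq_abs, cosh_eq]
  linarith [quadratic_le_exp_of_nonneg (abs_nonneg x), exp_pos (-|x|), abs_nonneg x]

lemma exp_neg_mul_cosh_mul_cosh_le (ν : ℝ) {x t : ℝ} (hx : 0 < x) (ht : 0 ≤ t) :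
    exp (-x * cosh t) * cosh (ν * t) ≤ exp ((|ν| + 1) ^ 2 / x) * exp (-1 * t) := by
  have hquad : (|ν| + 1) * t - x * (t ^ 2 / 4) ≤ (|ν| + 1) ^ 2 / x := by
    rw [le_div_iff₀ hx]
    linarith [sq_nonneg (x * t / 2 - (|ν| + 1))]
  calc exp (-x * cosh t) * cosh (ν * t)
      ≤ exp (-x * (t ^ 2 / 4)) * exp (|ν| * t) := by
        gcongr ?_ * ?_
        · exact exp_le_exp.mpr <|
            mul_le_mul_of_nonpos_left (sq_div_four_le_cosh t) (neg_nonpos.mpr hx.le)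
        · simpa [abs_mul, abs_of_nonneg ht] using cosh_le_exp_abs (ν * t)
    _ ≤ exp ((|ν| + 1) ^ 2 / x) * exp (-1 * t) := by
        rw [← exp_add, ← exp_add, exp_le_exp]
        linarith

lemma integrableOn_exp_neg_mul_cosh_mul_cosh (ν : ℝ) {x : ℝ} (hx : 0 < x) :
    IntegrableOn (fun t ↦ exp (-x * cosh t) * cosh (ν * t)) (Ioi 0) := by
  refine ((integrableOn_exp_mul_Ioi neg_one_lt_zero 0).const_mul
    (exp ((|ν| + 1) ^ 2 / x))).mono' (by fun_prop) ?_
  filter_upwards [ae_restrict_mem measurableSet_Ioi] with t ht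
  rw [norm_of_nonneg (by positivity)]
  exact exp_neg_mul_cosh_mul_cosh_le ν hx (le_of_lt ht)

lemma lintegral_exp_mul_sub_mul_cosh (ν : ℝ) {x : ℝ} (hx : 0 < x) :
    ∫⁻ t, ENNReal.ofReal (exp (ν * t - x * cosh t)) = ENNReal.ofReal (2 * besselK ν x) := by
  have hsum (t : ℝ) : exp (ν * t - x * cosh t) + exp (ν * -t - x * cosh (-t)) =
      2 * (exp (-x * cosh t) * cosh (ν * t)) := by
    rw [cosh_neg, cosh_eq (ν * t), sub_eq_add_neg, sub_eq_add_neg, exp_add, exp_add, neg_mul,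
      mul_neg]
    ring
  rw [lintegral_eq_setLIntegral_Ioi_add_comp_neg, ← lintegral_add_left (by fun_prop)]
  simp_rw [← ENNReal.ofReal_add (exp_nonneg _) (exp_nonneg _), hsum]
  rw [besselK, ← integral_const_mul, ofReal_integral_eq_lintegral_ofReal
    ((integrableOn_exp_neg_mul_cosh_mul_cosh ν hx).const_mul 2) (ae_of_all _ fun t ↦ by positivity)]

lemma mul_sqrt_div_mul_exp_add_div {a b : ℝ} (ha : 0 < a) (hb : 0 < b) (t : ℝ) :
    a * (√(b / a) * exp t) + b / (√(b / a) * exp t) = 2 * √(a * b) * cosh t := by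
  obtain ⟨α, hα, rfl⟩ : ∃ α, 0 < α ∧ α ^ 2 = a := ⟨√a, sqrt_pos.mpr ha, sq_sqrt ha.le⟩
  obtain ⟨β, hβ, rfl⟩ : ∃ β, 0 < β ∧ β ^ 2 = b := ⟨√b, sqrt_pos.mpr hb, sq_sqrt hb.le⟩
  rw [← div_pow, ← mul_pow, sqrt_sq (by positivity), sqrt_sq (by positivity), cosh_eq, exp_neg]
  field_simp

lemma setLIntegral_Ioi_rpow_mul_exp_neg (ν : ℝ) {a b p : ℝ} (ha : 0 < a) (hb : 0 < b)
    (hp : p ≠ 0) :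
    ∫⁻ u in Ioi 0, ENNReal.ofReal (u ^ (p * ν - 1) * exp (-(a * u ^ p + b / u ^ p))) =
      ENNReal.ofReal (2 / |p| * (b / a) ^ (ν / 2) * besselK ν (2 * √(a * b))) := by
  set r := √(b / a) with hr
  have hr_pos : 0 < r := sqrt_pos.mpr (by positivity)
  set u : ℝ → ℝ := fun t ↦ r ^ p⁻¹ * exp (p⁻¹ * t)
  have hu_pos (t : ℝ) : 0 < u t := by positivity
  have hu_rpow (t : ℝ) : u t ^ p = r * exp t := by
    rw [mul_rpow (by positivity) (exp_nonneg _), rpow_inv_rpow hr_pos.le hp, ← exp_mul,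
      mul_right_comm, inv_mul_cancel₀ hp, one_mul]
  have hweight (t : ℝ) : u t * u t ^ (p * ν - 1) = (b / a) ^ (ν / 2) * exp (ν * t) := by
    rw [mul_comm, ← rpow_add_one (hu_pos t).ne', sub_add_cancel, rpow_mul (hu_pos t).le, hu_rpow,
      mul_rpow hr_pos.le (exp_nonneg t), ← exp_mul, mul_comm t, hr, sqrt_eq_rpow,
      ← rpow_mul (by positivity), one_div_mul_eq_div]
  have hintegrand (t : ℝ) :
      |p⁻¹| * u t * (u t ^ (p * ν - 1) * exp (-(a * u t ^ p + b / u t ^ p))) =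
        |p|⁻¹ * (b / a) ^ (ν / 2) * exp (ν * t - 2 * √(a * b) * cosh t) := by
    rw [hu_rpow, hr, mul_sqrt_div_mul_exp_add_div ha hb, abs_inv, mul_assoc, ← mul_assoc (u t),
      hweight, sub_eq_add_neg, exp_add]
    ring
  calc _ = ∫⁻ t, ENNReal.ofReal (|p⁻¹| * u t) *
        ENNReal.ofReal (u t ^ (p * ν - 1) * exp (-(a * u t ^ p + b / u t ^ p))) :=
        setLIntegral_Ioi_eq_lintegral_const_mul_exp (by positivity) (inv_ne_zero hp) _
    _ = ∫⁻ t, ENNReal.ofReal (|p|⁻¹ * (b / a) ^ (ν / 2)) *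
        ENNReal.ofReal (exp (ν * t - 2 * √(a * b) * cosh t)) := by
        refine lintegral_congr fun t ↦ ?_
        rw [← ENNReal.ofReal_mul (by positivity), hintegrand, ENNReal.ofReal_mul (by positivity)]
    _ = ENNReal.ofReal (2 / |p| * (b / a) ^ (ν / 2) * besselK ν (2 * √(a * b))) := by
        rw [lintegral_const_mul _ (by fun_prop),
          lintegral_exp_mul_sub_mul_cosh ν (by positivity), ← ENNReal.ofReal_mul (by positivity)]
        congr 1
        ring

lemma setLIntegral_Ioi_inv_mul_exp_neg_sq {a b : ℝ} (ha : 0 < a) (hb : 0 < b) :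
    ∫⁻ u in Ioi 0, ENNReal.ofReal (u⁻¹ * exp (-(a * u ^ 2 + b / u ^ 2))) =
      ENNReal.ofReal (besselK 0 (2 * √(a * b))) := by
  simpa [rpow_neg_one] using setLIntegral_Ioi_rpow_mul_exp_neg 0 ha hb (two_ne_zero (α := ℝ))

end BesselK

section NormalProduct

lemma gaussianReal_map_const_add_const_mul (m : ℝ) (v : ℝ≥0) (a b : ℝ) :
    (gaussianReal m v).map (fun y ↦ a + b * y) =
      gaussianReal (a + b * m) (Real.toNNReal (b ^ 2) * v) := by
  have h := gaussianReal_const_add (gaussianReal_const_mul (HasLaw.id (μ := gaussianReal m v)) b) a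
  convert! h.map_eq using 2
  · rw [add_comm]
  · congr 1
    exact toNNReal_of_nonneg (sq_nonneg b)

lemma gaussianPDF_mul_gaussianPDF_mul_sq (θ x : ℝ) {σ u : ℝ} (hσ : σ ≠ 0) (hu : u ≠ 0) :
    gaussianPDF 0 1 u * gaussianPDF (θ * u ^ 2) (Real.toNNReal ((σ * u) ^ 2)) x =
      ENNReal.ofReal (1 / (2 * π * |σ|) * exp (θ * x / σ ^ 2)) *
        ENNReal.ofReal (|u|⁻¹ * exp (-((θ ^ 2 + σ ^ 2) / (2 * σ ^ 2) * u ^ 2 +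
          x ^ 2 / (2 * σ ^ 2) / u ^ 2))) := by
  have hconst : (√(2 * π * 1))⁻¹ * (√(2 * π * (σ * u) ^ 2))⁻¹ = 1 / (2 * π * |σ|) * |u|⁻¹ := by
    rw [mul_one, sqrt_mul (x := 2 * π) (by positivity), sqrt_sq_eq_abs, abs_mul,
      ← mul_inv, ← mul_assoc, mul_self_sqrt (by positivity), ← mul_assoc, mul_inv,
      one_div]
  have hexp : exp (-(u - 0) ^ 2 / (2 * 1)) *
        exp (-(x - θ * u ^ 2) ^ 2 / (2 * (σ * u) ^ 2)) =
      exp (θ * x / σ ^ 2) * exp (-((θ ^ 2 + σ ^ 2) / (2 * σ ^ 2) * u ^ 2 +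
        x ^ 2 / (2 * σ ^ 2) / u ^ 2)) := by
    rw [← exp_add, ← exp_add]
    congr 1
    field_simp
    ring
  rw [gaussianPDF, gaussianPDF, ← ENNReal.ofReal_mul (gaussianPDFReal_nonneg _ _ _),
    ← ENNReal.ofReal_mul (by positivity), gaussianPDFReal, gaussianPDFReal,
    coe_toNNReal _ (sq_nonneg _), NNReal.coe_one, mul_mul_mul_comm, hconst, hexp, mul_mul_mul_comm]

lemma lintegral_gaussianPDF_mul_sq_gaussianReal (θ : ℝ) {σ x : ℝ} (hσ : σ ≠ 0) (hx : x ≠ 0) :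
    ∫⁻ u, gaussianPDF (θ * u ^ 2) (Real.toNNReal ((σ * u) ^ 2)) x ∂gaussianReal 0 1 =
      ENNReal.ofReal (1 / (|σ| * π) * exp (θ * x / σ ^ 2) *
        besselK 0 (√(θ ^ 2 + σ ^ 2) * |x| / σ ^ 2)) := by
  have harg : 2 * √((θ ^ 2 + σ ^ 2) / (2 * σ ^ 2) * (x ^ 2 / (2 * σ ^ 2))) =
      √(θ ^ 2 + σ ^ 2) * |x| / σ ^ 2 := by
    rw [div_mul_div_comm, ← sq, sqrt_div (by positivity), sqrt_mul (by positivity),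
      sqrt_sq_eq_abs, sqrt_sq (by positivity)]
    field_simp
  set g : ℝ → ℝ≥0∞ := fun u ↦
    gaussianPDF 0 1 u * gaussianPDF (θ * u ^ 2) (Real.toNNReal ((σ * u) ^ 2)) x with hg
  have hg_even (u : ℝ) : g (-u) = g u := by simp [hg, gaussianPDF, gaussianPDFReal]
  have hg_Ioi (u : ℝ) (hu : u ∈ Ioi 0) :
      g u = ENNReal.ofReal (1 / (2 * π * |σ|) * exp (θ * x / σ ^ 2)) *
        ENNReal.ofReal (u⁻¹ * exp (-((θ ^ 2 + σ ^ 2) / (2 * σ ^ 2) * u ^ 2 +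
          x ^ 2 / (2 * σ ^ 2) / u ^ 2))) := by
    simp only [hg, gaussianPDF_mul_gaussianPDF_mul_sq θ x hσ (ne_of_gt hu), abs_of_pos hu.out]
  calc _ = ∫⁻ u, g u := by
        rw [gaussianReal_of_var_ne_zero 0 one_ne_zero,
          lintegral_withDensity_eq_lintegral_mul _ (by fun_prop) (by fun_prop)]
        rfl
    _ = 2 * ∫⁻ u in Ioi 0, g u := by
        rw [lintegral_eq_setLIntegral_Ioi_add_comp_neg]
        simp only [hg_even, two_mul]
    _ = 2 * (ENNReal.ofReal (1 / (2 * π * |σ|) * exp (θ * x / σ ^ 2)) *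
          ENNReal.ofReal (besselK 0 (√(θ ^ 2 + σ ^ 2) * |x| / σ ^ 2))) := by
        rw [setLIntegral_congr_fun measurableSet_Ioi hg_Ioi, lintegral_const_mul _ (by fun_prop),
          setLIntegral_Ioi_inv_mul_exp_neg_sq (by positivity) (by positivity), harg]
    _ = _ := by
        rw [← ENNReal.ofReal_mul (by positivity), ← ENNReal.ofReal_ofNat 2,
          ← ENNReal.ofReal_mul zero_le_two]
        congr 1
        field_simp

theorem normal_product_variance_gamma_pdf_general {Ω : Type*} [MeasurableSpace Ω] {μ : Measure Ω}
    (θ : ℝ) {σ : ℝ} (hσ : σ ≠ 0) {U V : Ω → ℝ} (hUV : IndepFun U V μ)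
    (hU : HasLaw U (gaussianReal 0 1) μ) (hV : HasLaw V (gaussianReal 0 1) μ) :
    HasLaw (fun ω ↦ θ * U ω ^ 2 + σ * U ω * V ω)
      (volume.withDensity fun x ↦ ENNReal.ofReal (1 / (|σ| * π) * exp (θ * x / σ ^ 2) *
        besselK 0 (√(θ ^ 2 + σ ^ 2) * |x| / σ ^ 2))) μ := by
  have hμ : IsProbabilityMeasure μ := hU.isProbabilityMeasure_iff.mpr inferInstance
  refine HasLaw.comp (X := fun ω ↦ (U ω, V ω)) (Y := fun z ↦ θ * z.1 ^ 2 + σ * z.1 * z.2)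
    ⟨by fun_prop, ?_⟩ (hUV.hasLaw_prod hU hV)
  have hcond : ∀ᵐ u ∂gaussianReal 0 1,
      (gaussianReal 0 1).map (fun v ↦ θ * u ^ 2 + σ * u * v) =
        volume.withDensity (gaussianPDF (θ * u ^ 2) (Real.toNNReal ((σ * u) ^ 2))) := by
    have := nullSingletonClass_gaussianReal (μ := 0) one_ne_zero
    filter_upwards [Measure.ae_ne (gaussianReal 0 1) 0] with u hu
    have hvar : Real.toNNReal ((σ * u) ^ 2) ≠ 0 := (toNNReal_pos.mpr (by positivity)).ne'
    rw [gaussianReal_map_const_add_const_mul, mul_zero, add_zero, mul_one,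
      gaussianReal_of_var_ne_zero _ hvar]
  rw [map_prod_eq_withDensity_lintegral (by fun_prop) (by fun_prop) hcond]
  refine withDensity_congr_ae ?_
  filter_upwards [Measure.ae_ne volume 0] with x hx
  exact lintegral_gaussianPDF_mul_sq_gaussianReal θ hσ hx

end NormalProduct

/-- If `U` and `V` are independent standard normal random variables, then `θU² + σUV` has
probability density function `f(x) = (1/(σπ)) exp(θx/σ²) K₀(√(θ²+σ²)|x|/σ²)`, i.e., it has
the variance-gamma distribution `VG(1, θ, σ, 0)`. -/
theorem normal_product_variance_gamma_pdf
    {Ω : Type*} [MeasurableSpace Ω] (μ : Measure Ω) [IsProbabilityMeasure μ]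
    (θ σ : ℝ) (hσ : 0 < σ)
    (U V : Ω → ℝ) (hU : Measurable U) (hV : Measurable V)
    (hUV : IndepFun U V μ)
    (hUlaw : Measure.map U μ = gaussianReal 0 1)
    (hVlaw : Measure.map V μ = gaussianReal 0 1) :
    Measure.map (fun ω => θ * (U ω) ^ 2 + σ * U ω * V ω) μ =
      (volume : Measure ℝ).withDensity (fun x => ENNReal.ofReal
        (1 / (σ * Real.pi) * Real.exp (θ * x / σ ^ 2) *
          besselK 0 (Real.sqrt (θ ^ 2 + σ ^ 2) * |x| / σ ^ 2))) := by
  simpa only [abs_of_pos hσ] using (normal_product_variance_gamma_pdf_general θ hσ.ne' hUV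
    ⟨hU.aemeasurable, hUlaw⟩ ⟨hV.aemeasurable, hVlaw⟩).map_eq
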